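/- Up to isomorphism, the 2-dimensional endo-commutative straight algebras of rank 1 over a field K are exactly: S(0,0,0,0,0,0), S(0,0,0,0,0,1), S(0,0,0,1,0,λ) for λ ∈ K (pairwise non-isomorphic for distinct λ), and S(0,1,0,1,0,1); i.e., every such algebra is isomorphic to exactly one in this list. -/

import Mathlib

/-- The bilinear multiplication on K² (basis e = (1,0), f = (0,1)) with structure constants
e² = a₁e+b₁f, f² = a₂e+b₂f, ef = a₃e+b₃f, fe = a₄e+b₄f. -/
def mulG {K : Type*} [Field K] (a₁ b₁ a₂ b₂ a₃ b₃ a₄ b₄ : K)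
    (x y : K × K) : K × K :=
  (x.1*y.1*a₁ + x.1*y.2*a₃ + x.2*y.1*a₄ + x.2*y.2*a₂,
   x.1*y.1*b₁ + x.1*y.2*b₃ + x.2*y.1*b₄ + x.2*y.2*b₂)

/-- The algebra S(p,q,a,b,c,d): e² = f, f² = pe+qf, ef = ae+bf, fe = ce+df. -/
def mulS {K : Type*} [Field K] (p q a b c d : K) : K × K → K × K → K × K :=
  mulG 0 1 p q a b c d

/-- Endo-commutativity: (xy)² = x²y² for all x, y. -/
def IsEC {K : Type*} [Field K] (m : K × K → K × K → K × K) : Prop :=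
  ∀ x y : K × K, m (m x y) (m x y) = m (m x x) (m y y)

/-- Straightness: some x has x, x² linearly independent. -/
def IsStraight {K : Type*} [Field K] (m : K × K → K × K → K × K) : Prop :=
  ∃ x : K × K, LinearIndependent K ![x, m x x]

/-- The 4×2 structure matrix of the algebra with the given structure constants. -/
def structMatrix {K : Type*} [Field K] (a₁ b₁ a₂ b₂ a₃ b₃ a₄ b₄ : K) :
    Matrix (Fin 4) (Fin 2) K :=
  !![a₁, b₁; a₂, b₂; a₃, b₃; a₄, b₄]

/-- Isomorphism of algebras on K²: a bijective linear map preserving multiplication. -/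
def AlgIso {K : Type*} [Field K] (m₁ m₂ : K × K → K × K → K × K) : Prop :=
  ∃ φ : (K × K) ≃ₗ[K] (K × K), ∀ u v : K × K, φ (m₁ u v) = m₂ (φ u) (φ v)

/-!
In a straight algebra of rank one, every product is a multiple of `f = e²` for any `e` independent
of its square, so the algebra is some `S(0, q, 0, b, 0, d)`, in which
`xy = N(x, y) f` with `N(x, y) = x₁y₁ + b x₁y₂ + d x₂y₁ + q x₂y₂`. Endo-commutativity then reads
`q (N(x, y)² - N(x, x) N(y, y)) = 0`, which means `q = 0`, or `b = d` and `q = b²`.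
An isomorphism from it to another `S(0, q', 0, b', 0, d')` is the choice of a new `e = (α, β)` in
the source. For `q = 0` this merely rescales `(b, d)` by `α ≠ 0`, so the orbits are the origin and
the punctured lines through it; for `q = b² ≠ 0` and `d = b`, it normalises `b` to `1`.
-/

section LinearAlgebra

open scoped Matrix

lemma exists_linearEquiv_prod_of_linearIndependent {D V : Type*} [DivisionRing D]
    [AddCommGroup V] [Module D V] (hV : Module.finrank D V = 2) {e f : V}
    (h : LinearIndependent D ![e, f]) :
    ∃ ψ : (D × D) ≃ₗ[D] V, ∀ x, ψ x = x.1 • e + x.2 • f := by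
  let B := basisOfLinearIndependentOfCardEqFinrank h (by simp [hV])
  refine ⟨(B.equivFun ≪≫ₗ LinearEquiv.finTwoArrow D D).symm, fun x => ?_⟩
  simp [B, Module.Basis.equivFun_symm_apply, Fin.sum_univ_two]

variable {K : Type*} [Field K]

lemma linearIndependent_pair_prod_iff_det_ne_zero {x y : K × K} :
    LinearIndependent K ![x, y] ↔ x.1 * y.2 - x.2 * y.1 ≠ 0 := by
  have hrow : (LinearEquiv.finTwoArrow K K).symm ∘ ![x, y] =
      (!![x.1, x.2; y.1, y.2] : Matrix (Fin 2) (Fin 2) K).row := by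
    ext i j
    fin_cases i <;> fin_cases j <;> rfl
  rw [← LinearMap.linearIndependent_iff (LinearEquiv.finTwoArrow K K).symm.toLinearMap
    (LinearEquiv.ker _), LinearEquiv.coe_coe, hrow, Matrix.linearIndependent_rows_iff_isUnit,
    Matrix.isUnit_iff_isUnit_det, Matrix.det_fin_two_of, isUnit_iff_ne_zero]

lemma exists_vecMul_eq_smul_of_rank_le_one {m n : Type*} [Fintype m] [Fintype n]
    {M : Matrix m n K} (hM : M.rank ≤ 1) {u : m → K} (hu : u ᵥ* M ≠ 0) (w : m → K) :
    ∃ c : K, w ᵥ* M = c • (u ᵥ* M) := by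
  have hrange : Module.finrank K (LinearMap.range M.vecMulLinear) ≤ 1 := by
    rwa [range_vecMulLinear, ← Matrix.rank_eq_finrank_span_row]
  obtain ⟨v, hv⟩ := finrank_le_one_iff.mp hrange
  obtain ⟨s, hs⟩ := hv ⟨u ᵥ* M, u, rfl⟩
  obtain ⟨t, ht⟩ := hv ⟨w ᵥ* M, w, rfl⟩
  replace hs : s • (v : n → K) = u ᵥ* M := congrArg Subtype.val hs
  replace ht : t • (v : n → K) = w ᵥ* M := congrArg Subtype.val ht
  have hs0 : s ≠ 0 := by
    rintro rfl
    exact hu (by rw [← hs, zero_smul])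
  exact ⟨t / s, by rw [← hs, ← ht, smul_smul, div_mul_cancel₀ t hs0]⟩

end LinearAlgebra

section Algebras

open scoped Matrix

variable {K : Type*} [Field K]

lemma AlgIso.trans {m₁ m₂ m₃ : K × K → K × K → K × K} (h₁₂ : AlgIso m₁ m₂)
    (h₂₃ : AlgIso m₂ m₃) : AlgIso m₁ m₃ := by
  obtain ⟨φ, hφ⟩ := h₁₂
  obtain ⟨ψ, hψ⟩ := h₂₃
  exact ⟨φ ≪≫ₗ ψ, fun u v => by simp only [LinearEquiv.trans_apply, hφ, hψ]⟩

lemma IsEC.of_algIso {m₁ m₂ : K × K → K × K → K × K} (hm : IsEC m₁)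
    (h : AlgIso m₁ m₂) : IsEC m₂ := by
  obtain ⟨φ, hφ⟩ := h
  intro x y
  obtain ⟨x, rfl⟩ := φ.surjective x
  obtain ⟨y, rfl⟩ := φ.surjective y
  simp only [← hφ, hm x y]

variable {a₁ b₁ a₂ b₂ a₃ b₃ a₄ b₄ : K}

lemma mulG_smul_add_smul (e f : K × K) (s t s' t' : K) :
    mulG a₁ b₁ a₂ b₂ a₃ b₃ a₄ b₄ (s • e + t • f) (s' • e + t' • f) =
      (s * s') • mulG a₁ b₁ a₂ b₂ a₃ b₃ a₄ b₄ e e + (s * t') • mulG a₁ b₁ a₂ b₂ a₃ b₃ a₄ b₄ e f +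
      (t * s') • mulG a₁ b₁ a₂ b₂ a₃ b₃ a₄ b₄ f e +
      (t * t') • mulG a₁ b₁ a₂ b₂ a₃ b₃ a₄ b₄ f f := by
  ext <;> simp [mulG] <;> ring

lemma algIso_mulG_mulS_iff {p q a b c d : K} :
    AlgIso (mulG a₁ b₁ a₂ b₂ a₃ b₃ a₄ b₄) (mulS p q a b c d) ↔
      ∃ e f : K × K, LinearIndependent K ![e, f] ∧
        mulG a₁ b₁ a₂ b₂ a₃ b₃ a₄ b₄ e e = f ∧
        mulG a₁ b₁ a₂ b₂ a₃ b₃ a₄ b₄ f f = p • e + q • f ∧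
        mulG a₁ b₁ a₂ b₂ a₃ b₃ a₄ b₄ e f = a • e + b • f ∧
        mulG a₁ b₁ a₂ b₂ a₃ b₃ a₄ b₄ f e = c • e + d • f := by
  constructor
  · rintro ⟨φ, hφ⟩
    refine ⟨φ.symm (1, 0), φ.symm (0, 1), ?_, ?_, ?_, ?_, ?_⟩
    · rw [← LinearMap.linearIndependent_iff φ.toLinearMap (LinearEquiv.ker _)]
      have himage : φ ∘ ![φ.symm (1, 0), φ.symm (0, 1)] = ![(1, 0), (0, 1)] := by
        ext i <;> fin_cases i <;> simp
      rw [LinearEquiv.coe_coe, himage, linearIndependent_pair_prod_iff_det_ne_zero]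
      simp
    all_goals
      apply φ.injective
      rw [hφ]
      simp [mulS, mulG]
  · rintro ⟨e, f, hli, hee, hff, hef, hfe⟩
    obtain ⟨ψ, hψ⟩ := exists_linearEquiv_prod_of_linearIndependent (by simp) hli
    have hmul (x y : K × K) :
        ψ (mulS p q a b c d x y) = mulG a₁ b₁ a₂ b₂ a₃ b₃ a₄ b₄ (ψ x) (ψ y) := by
      rw [hψ x, hψ y, mulG_smul_add_smul, hee, hff, hef, hfe, hψ]
      simp only [mulS, mulG]
      module
    exact ⟨ψ.symm, fun u v => ψ.injective (by simp [hmul])⟩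

lemma mulG_eq_vecMul_structMatrix (x y : K × K) :
    mulG a₁ b₁ a₂ b₂ a₃ b₃ a₄ b₄ x y = LinearEquiv.finTwoArrow K K
      (![x.1 * y.1, x.2 * y.2, x.1 * y.2, x.2 * y.1] ᵥ* structMatrix a₁ b₁ a₂ b₂ a₃ b₃ a₄ b₄) := by
  ext <;> simp [mulG, structMatrix] <;> ring

lemma exists_mulG_eq_smul_of_rank_le_one
    (hrank : (structMatrix a₁ b₁ a₂ b₂ a₃ b₃ a₄ b₄).rank ≤ 1) {x y : K × K}
    (hxy : mulG a₁ b₁ a₂ b₂ a₃ b₃ a₄ b₄ x y ≠ 0) (z w : K × K) :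
    ∃ c : K, mulG a₁ b₁ a₂ b₂ a₃ b₃ a₄ b₄ z w = c • mulG a₁ b₁ a₂ b₂ a₃ b₃ a₄ b₄ x y := by
  simp only [mulG_eq_vecMul_structMatrix, ne_eq, LinearEquiv.map_eq_zero_iff] at hxy ⊢
  obtain ⟨c, hc⟩ := exists_vecMul_eq_smul_of_rank_le_one hrank hxy
    ![z.1 * w.1, z.2 * w.2, z.1 * w.2, z.2 * w.1]
  exact ⟨c, by rw [hc, map_smul]⟩

lemma exists_algIso_mulS_of_isStraight_of_rank_le_one
    (hstraight : IsStraight (mulG a₁ b₁ a₂ b₂ a₃ b₃ a₄ b₄))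
    (hrank : (structMatrix a₁ b₁ a₂ b₂ a₃ b₃ a₄ b₄).rank ≤ 1) :
    ∃ q b d : K, AlgIso (mulG a₁ b₁ a₂ b₂ a₃ b₃ a₄ b₄) (mulS 0 q 0 b 0 d) := by
  obtain ⟨e, hli⟩ := hstraight
  have hsq : mulG a₁ b₁ a₂ b₂ a₃ b₃ a₄ b₄ e e ≠ 0 := hli.ne_zero 1
  have hline := exists_mulG_eq_smul_of_rank_le_one hrank hsq
  generalize hf : mulG a₁ b₁ a₂ b₂ a₃ b₃ a₄ b₄ e e = f at hli hline
  obtain ⟨q, hff⟩ := hline f f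
  obtain ⟨b, hef⟩ := hline e f
  obtain ⟨d, hfe⟩ := hline f e
  exact ⟨q, b, d, algIso_mulG_mulS_iff.mpr ⟨e, f, hli, hf, by simp [hff, hef, hfe]⟩⟩

variable {q b d q' b' d' : K}

lemma mulS_rankOne_apply (x y : K × K) :
    mulS 0 q 0 b 0 d x y =
      (0, x.1 * y.1 + x.1 * y.2 * b + x.2 * y.1 * d + x.2 * y.2 * q) := by
  simp [mulS, mulG]

lemma isEC_mulS_rankOne_iff : IsEC (mulS 0 q 0 b 0 d) ↔ q = 0 ∨ q = b ^ 2 ∧ d = b := by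
  constructor
  · intro hEC
    refine or_iff_not_imp_left.mpr fun hq => ?_
    have hef : b ^ 2 = q := by
      apply mul_right_cancel₀ hq
      simpa [mulS_rankOne_apply, ← sq] using hEC (1, 0) (0, 1)
    have hsum : (1 + b) ^ 2 = 1 + b + d + q := by
      simpa [mulS_rankOne_apply, hq, ← sq] using hEC (1, 0) (1, 1)
    exact ⟨hef.symm, by linear_combination hef - hsum⟩
  · rintro (rfl | ⟨rfl, rfl⟩) x y <;>
      simp only [mulS_rankOne_apply, Prod.mk.injEq, true_and] <;> ring

lemma algIso_mulS_rankOne_iff :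
    AlgIso (mulS 0 q 0 b 0 d) (mulS 0 q' 0 b' 0 d') ↔
      ∃ α β δ : K, α ≠ 0 ∧ δ ≠ 0 ∧ δ = α ^ 2 + α * β * (b + d) + β ^ 2 * q ∧
        q' = δ * q ∧ b' = α * b + β * q ∧ d' = α * d + β * q := by
  refine algIso_mulG_mulS_iff.trans ?_
  constructor
  · rintro ⟨⟨α, β⟩, ⟨γ, δ⟩, hli, hee, hff, hef, hfe⟩
    simp only [mulG, Prod.mk.injEq, Prod.smul_mk, Prod.mk_add_mk, smul_eq_mul] at hee hff hef hfe
    obtain rfl : γ = 0 := by linear_combination -hee.1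
    obtain ⟨hα, hδ⟩ : α ≠ 0 ∧ δ ≠ 0 := by
      simpa [linearIndependent_pair_prod_iff_det_ne_zero] using hli
    refine ⟨α, β, δ, hα, hδ, ?_, mul_right_cancel₀ hδ ?_, mul_right_cancel₀ hδ ?_,
      mul_right_cancel₀ hδ ?_⟩
    · linear_combination -hee.2
    · linear_combination -hff.2
    · linear_combination -hef.2
    · linear_combination -hfe.2
  · rintro ⟨α, β, δ, hα, hδ, rfl, rfl, rfl, rfl⟩
    refine ⟨(α, β), (0, α ^ 2 + α * β * (b + d) + β ^ 2 * q), ?_, ?_, ?_, ?_, ?_⟩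
    · simp [linearIndependent_pair_prod_iff_det_ne_zero, hα, hδ]
    all_goals
      simp only [mulG, Prod.mk.injEq, Prod.smul_mk, Prod.mk_add_mk, smul_eq_mul]
      constructor <;> ring

lemma algIso_mulS_rankOne_zero_iff :
    AlgIso (mulS 0 0 0 b 0 d) (mulS 0 q' 0 b' 0 d') ↔
      q' = 0 ∧ ∃ α : K, α ≠ 0 ∧ b' = α * b ∧ d' = α * d := by
  rw [algIso_mulS_rankOne_iff]
  constructor
  · rintro ⟨α, β, δ, hα, -, -, hq, hb, hd⟩
    exact ⟨by simpa using hq, α, hα, by simpa using hb, by simpa using hd⟩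
  · rintro ⟨rfl, α, hα, rfl, rfl⟩
    exact ⟨α, 0, α ^ 2, hα, pow_ne_zero 2 hα, by simp⟩

lemma algIso_mulS_rankOne_zero_cases (b d : K) :
    AlgIso (mulS 0 0 0 b 0 d) (mulS 0 0 0 0 0 0) ∨
    AlgIso (mulS 0 0 0 b 0 d) (mulS 0 0 0 0 0 1) ∨
    ∃ l : K, AlgIso (mulS 0 0 0 b 0 d) (mulS 0 0 0 1 0 l) := by
  simp only [algIso_mulS_rankOne_zero_iff, true_and]
  obtain rfl | hb := eq_or_ne b 0
  · obtain rfl | hd := eq_or_ne d 0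
    · exact .inl ⟨1, by simp⟩
    · exact .inr (.inl ⟨d⁻¹, by simp [hd]⟩)
  · exact .inr (.inr ⟨b⁻¹ * d, b⁻¹, by simp [hb]⟩)

lemma algIso_mulS_rankOne_sq (hb : b ≠ 0) : AlgIso (mulS 0 (b ^ 2) 0 b 0 b) (mulS 0 1 0 1 0 1) :=
  algIso_mulS_rankOne_iff.mpr ⟨b⁻¹, 0, (b ^ 2)⁻¹, by simp [hb]⟩

end Algebras

/-- Classification: every 2-dimensional endo-commutative straight algebra of rank 1 over K
is isomorphic to exactly one of S(0,0,0,0,0,0), S(0,0,0,0,0,1), S(0,0,0,1,0,λ) (λ ∈ K),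
S(0,1,0,1,0,1), and these are pairwise non-isomorphic. -/
theorem stmt15 {K : Type*} [Field K] :
    (∀ a₁ b₁ a₂ b₂ a₃ b₃ a₄ b₄ : K,
      IsEC (mulG a₁ b₁ a₂ b₂ a₃ b₃ a₄ b₄) →
      IsStraight (mulG a₁ b₁ a₂ b₂ a₃ b₃ a₄ b₄) →
      (structMatrix a₁ b₁ a₂ b₂ a₃ b₃ a₄ b₄).rank = 1 →
      (AlgIso (mulG a₁ b₁ a₂ b₂ a₃ b₃ a₄ b₄) (mulS 0 0 0 0 0 0) ∨
       AlgIso (mulG a₁ b₁ a₂ b₂ a₃ b₃ a₄ b₄) (mulS 0 0 0 0 0 1) ∨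
       (∃ l : K, AlgIso (mulG a₁ b₁ a₂ b₂ a₃ b₃ a₄ b₄) (mulS 0 0 0 1 0 l)) ∨
       AlgIso (mulG a₁ b₁ a₂ b₂ a₃ b₃ a₄ b₄) (mulS 0 1 0 1 0 1))) ∧
    -- pairwise non-isomorphic
    (¬ AlgIso (mulS (0:K) 0 0 0 0 0) (mulS 0 0 0 0 0 1)) ∧
    (∀ l : K, ¬ AlgIso (mulS (0:K) 0 0 0 0 0) (mulS 0 0 0 1 0 l)) ∧
    (¬ AlgIso (mulS (0:K) 0 0 0 0 0) (mulS 0 1 0 1 0 1)) ∧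
    (∀ l : K, ¬ AlgIso (mulS (0:K) 0 0 0 0 1) (mulS 0 0 0 1 0 l)) ∧
    (¬ AlgIso (mulS (0:K) 0 0 0 0 1) (mulS 0 1 0 1 0 1)) ∧
    (∀ l l' : K, l ≠ l' → ¬ AlgIso (mulS (0:K) 0 0 1 0 l) (mulS 0 0 0 1 0 l')) ∧
    (∀ l : K, ¬ AlgIso (mulS (0:K) 0 0 1 0 l) (mulS 0 1 0 1 0 1)) := by
  refine ⟨fun a₁ b₁ a₂ b₂ a₃ b₃ a₄ b₄ hEC hstraight hrank => ?_, ?_⟩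
  · obtain ⟨q, b, d, hiso⟩ := exists_algIso_mulS_of_isStraight_of_rank_le_one hstraight hrank.le
    by_cases hq : q = 0
    · subst hq
      obtain h | h | ⟨l, h⟩ := algIso_mulS_rankOne_zero_cases b d
      · exact .inl (hiso.trans h)
      · exact .inr (.inl (hiso.trans h))
      · exact .inr (.inr (.inl ⟨l, hiso.trans h⟩))
    · obtain ⟨rfl, rfl⟩ := (isEC_mulS_rankOne_iff.mp (hEC.of_algIso hiso)).resolve_left hq
      exact .inr (.inr (.inr (hiso.trans (algIso_mulS_rankOne_sq (ne_zero_pow two_ne_zero hq)))))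
  · simpa [algIso_mulS_rankOne_zero_iff] using fun l l' (hne : l ≠ l') => hne.symm
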